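/- Let granular-balls be indexed by a nonempty finite set J with centers c_i : ι → ℝ, positive sizes w_i > 0, and decision classes d_i in a finite nonempty set L, with the assignment i ↦ d_i non-constant. Let B ⊆ ι be a finite attribute subset with |B| = i and let a ∈ ι with a ∉ B. Then the significance of a relative to B is nonnegative: SIG^i(a, B) = W∂^{i+1}_{B ∪ {a}} − W∂^{i+1}_B ≥ 0. -/

import Mathlib

open Finset

/-- Partial Euclidean distance over an attribute subset `B`. -/
noncomputable def pdist {ι : Type*} (B : Finset ι) (x y : ι → ℝ) : ℝ :=
  Real.sqrt (∑ k ∈ B, (x k - y k) ^ 2)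

/-- If the decision-class assignment is non-constant, then for every class `t`
the set of balls whose class differs from `t` is nonempty. -/
lemma filter_ne_nonempty {J L : Type*} [Fintype J] [DecidableEq L] (d : J → L)
    (hd : ∃ i₁ i₂, d i₁ ≠ d i₂) (t : L) :
    (Finset.univ.filter (fun i => d i ≠ t)).Nonempty := by
  obtain ⟨i₁, i₂, h⟩ := hd
  by_cases h1 : d i₁ = t
  · exact ⟨i₂, Finset.mem_filter.mpr ⟨Finset.mem_univ _, fun he => h (h1.trans he.symm)⟩⟩
  · exact ⟨i₁, Finset.mem_filter.mpr ⟨Finset.mem_univ _, h1⟩⟩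

/-- Granular-ball fuzzy positive-region membership of ball `j`:
`POS^C_B(j) = max_{t ∈ L} (1/√C) · min_{i : d i ≠ t} Δ_B(c i, c j)`. -/
noncomputable def pos {ι J L : Type*} [Fintype J] [Fintype L] [Nonempty L] [DecidableEq L]
    (c : J → ι → ℝ) (d : J → L) (hd : ∃ i₁ i₂, d i₁ ≠ d i₂)
    (C : ℝ) (B : Finset ι) (j : J) : ℝ :=
  Finset.univ.sup' Finset.univ_nonempty fun t : L =>
    (1 / Real.sqrt C) *
      (Finset.univ.filter fun i => d i ≠ t).inf' (filter_ne_nonempty d hd t)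
        (fun i => pdist B (c i) (c j))

/-- Weighted granular-ball fuzzy dependency
`W∂^C_B = (∑_j w_j · POS^C_B(j)) / (∑_j w_j)`. -/
noncomputable def wdep {ι J L : Type*} [Fintype J] [Fintype L] [Nonempty L] [DecidableEq L]
    (c : J → ι → ℝ) (d : J → L) (hd : ∃ i₁ i₂, d i₁ ≠ d i₂)
    (w : J → ℝ) (C : ℝ) (B : Finset ι) : ℝ :=
  (∑ j, w j * pos c d hd C B j) / (∑ j, w j)


/-- Significance of attribute `a` relative to `B` (with `i = |B|`):
`SIG^i(a, B) = W∂^{i+1}_{B ∪ {a}} − W∂^{i+1}_B`, where the superscript `i+1`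
denotes the distance parameter `C = i + 1`. -/
noncomputable def sig {ι J L : Type*} [DecidableEq ι] [Fintype J] [Fintype L]
    [Nonempty L] [DecidableEq L]
    (c : J → ι → ℝ) (d : J → L) (hd : ∃ i₁ i₂, d i₁ ≠ d i₂)
    (w : J → ℝ) (a : ι) (B : Finset ι) : ℝ :=
  wdep c d hd w ((B.card : ℝ) + 1) (insert a B) -
    wdep c d hd w ((B.card : ℝ) + 1) B

/-!
The parameter `C = |B| + 1` is the same in both terms of `sig`, so only the attribute set varies:
enlarging it adds nonnegative summands to every squared distance, and minimum, maximum and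
weighted mean are monotone.
-/

section Monotonicity

variable {ι J L : Type*} {B B' : Finset ι}

theorem pdist_mono (h : B ⊆ B') (x y : ι → ℝ) : pdist B x y ≤ pdist B' x y :=
  Real.sqrt_le_sqrt (sum_le_sum_of_subset_of_nonneg h fun _ _ _ ↦ sq_nonneg _)

variable [Fintype J] [Fintype L] [Nonempty L] [DecidableEq L]
  (c : J → ι → ℝ) (d : J → L) (hd : ∃ i₁ i₂, d i₁ ≠ d i₂)

theorem pos_mono (h : B ⊆ B') (C : ℝ) (j : J) : pos c d hd C B j ≤ pos c d hd C B' j :=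
  sup'_mono_fun fun _ _ ↦
    mul_le_mul_of_nonneg_left (inf'_mono_fun fun _ _ ↦ pdist_mono h _ _) (by positivity)

theorem wdep_mono {w : J → ℝ} (hw : 0 ≤ w) (h : B ⊆ B') (C : ℝ) :
    wdep c d hd w C B ≤ wdep c d hd w C B' := by
  have weighted_pos_le (j : J) : w j * pos c d hd C B j ≤ w j * pos c d hd C B' j :=
    mul_le_mul_of_nonneg_left (pos_mono c d hd h C j) (hw j)
  exact div_le_div_of_nonneg_right (sum_le_sum fun j _ ↦ weighted_pos_le j)
    (sum_nonneg fun j _ ↦ hw j)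

theorem sig_nonneg_general [DecidableEq ι] {w : J → ℝ} (hw : 0 < w) (B : Finset ι) (a : ι) :
    0 ≤ sig c d hd w a B :=
  sub_nonneg.mpr (wdep_mono c d hd hw.le (subset_insert a B) _)

end Monotonicity

/-- the significance of an attribute `a ∉ B` relative to `B` is
nonnegative: `SIG^i(a, B) = W∂^{i+1}_{B ∪ {a}} − W∂^{i+1}_B ≥ 0`. -/
theorem sig_nonneg {ι J L : Type*} [Fintype ι] [DecidableEq ι]
    [Fintype J] [Nonempty J] [Fintype L] [Nonempty L] [DecidableEq L]
    (c : J → ι → ℝ) (w : J → ℝ) (hw : ∀ i, 0 < w i)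
    (d : J → L) (hd : ∃ i₁ i₂, d i₁ ≠ d i₂)
    (B : Finset ι) (a : ι) (ha : a ∉ B) :
    0 ≤ sig c d hd w a B :=
  sig_nonneg_general c d hd (lt_of_strongLT hw) B a
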